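/- (Malmsten/Binet formula) For Re s > 0, log Γ(s) = ∫₀^∞ [ (s−1) e^{-t} − (e^{-t} − e^{-s t})/(1 − e^{-t}) ] · (dt/t). -/

import Mathlib

open MeasureTheory

noncomputable def mbG (s : ℂ) (t : ℝ) : ℂ :=
  ((s - 1) * Complex.exp (-t) -
    (Complex.exp (-t) - Complex.exp (-s * t)) / (1 - Complex.exp (-t))) / t

noncomputable def mbG' (s : ℂ) (t : ℝ) : ℂ :=
  (Complex.exp (-t) - t * Complex.exp (-s * t) / (1 - Complex.exp (-t))) / t

noncomputable def mbR (x : ℝ) (t : ℝ) : ℝ :=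
  ((x - 1) * Real.exp (-t) -
    (Real.exp (-t) - Real.exp (-x * t)) / (1 - Real.exp (-t))) / t

lemma mbG_ofReal (x t : ℝ) : mbG x t = (mbR x t : ℂ) := by
  simp [mbG, mbR]

lemma mb_one_sub_pos {t : ℝ} (ht : 0 < t) : 0 < 1 - Real.exp (-t) := by
  have : Real.exp (-t) < 1 := by simpa using ht
  linarith

lemma mb_one_sub_ne {t : ℝ} (ht : 0 < t) : (1 - Complex.exp (-t) : ℂ) ≠ 0 := by
  have := (mb_one_sub_pos ht).ne'
  intro h
  apply this
  exact_mod_cast h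

lemma mbG_hasDeriv (s : ℂ) (t : ℝ) : HasDerivAt (fun z => mbG z t) (mbG' s t) s := by
  unfold mbG mbG'
  have h1 : HasDerivAt (fun z : ℂ => -z * (t:ℂ)) (-1 * (t:ℂ)) s :=
    ((hasDerivAt_id s).neg).mul_const _
  have h2 := h1.cexp
  have h3 := ((((hasDerivAt_id s).sub_const 1).mul_const (Complex.exp (-t))).sub
    ((h2.const_sub (Complex.exp (-t))).div_const (1 - Complex.exp (-t)))).div_const (t:ℂ)
  convert! h3 using 1
  ring

lemma mb_exp_norm {c t : ℝ} (ht : 0 < t) {z : ℂ} (hz : c ≤ z.re) :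
    ‖Complex.exp (-z * t)‖ ≤ Real.exp (-c * t) := by
  rw [Complex.norm_exp]
  apply Real.exp_le_exp.2
  simp
  nlinarith

lemma mb_convex (c : ℝ) : Convex ℝ {z : ℂ | c ≤ z.re} := convex_halfSpace_re_ge c

lemma mb_exp_diff {c t : ℝ} (ht : 0 < t) (hc : c ≤ 1) {z : ℂ} (hz : c ≤ z.re) :
    ‖Complex.exp (-t) - Complex.exp (-z * t)‖ ≤ t * Real.exp (-c * t) * ‖z - 1‖ := by
  have := Convex.norm_image_sub_le_of_norm_hasDerivWithin_le
    (f := fun z : ℂ => Complex.exp (-z * t)) (s := {z : ℂ | c ≤ z.re})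
    (f' := fun z => Complex.exp (-z * t) * (-1 * t)) (C := t * Real.exp (-c * t))
    (x := z) (y := 1)
    (fun w _ => ((((hasDerivAt_id w).neg).mul_const (t:ℂ)).cexp).hasDerivWithinAt)
    (fun w hw => by
      have := mb_exp_norm ht hw
      simp only [norm_mul, norm_neg, norm_one, one_mul, Complex.norm_real, Real.norm_eq_abs,
        abs_of_pos ht]
      nlinarith) (mb_convex c) hz (by simpa using hc)
  rw [norm_sub_rev z 1]
  simpa using this

lemma mbG'_bound {c t : ℝ} (ht : 0 < t) (hc : c ≤ 1) {z : ℂ} (hz : c ≤ z.re) :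
    ‖mbG' z t‖ ≤ (‖z - 1‖ + 1) * Real.exp (-c * t) := by
  have hne := mb_one_sub_ne ht
  have htc : (t : ℂ) ≠ 0 := by exact_mod_cast ht.ne'
  have e : mbG' z t = (Complex.exp (-t) - Complex.exp (-z * t)) / t
      + Complex.exp (-z * t) * ((1 / t - 1 / (1 - Real.exp (-t)) : ℝ) : ℂ) := by
    unfold mbG'
    push_cast
    field_simp
    ring
  have h1 : |1 / t - 1 / (1 - Real.exp (-t))| ≤ 1 := by
    have hp := mb_one_sub_pos ht
    have hle : 1 - Real.exp (-t) ≤ t := by linarith [Real.add_one_le_exp (-t)]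
    have hA : 1 / t ≤ 1 / (1 - Real.exp (-t)) := one_div_le_one_div_of_le hp hle
    have hB : 1 / (1 - Real.exp (-t)) ≤ 1 / t + 1 := by
      have h2 : (1 + t) * Real.exp (-t) ≤ 1 := by
        have h3 : Real.exp t * Real.exp (-t) = 1 := by rw [← Real.exp_add]; simp
        nlinarith [Real.add_one_le_exp t, Real.exp_pos (-t)]
      rw [div_add_one ht.ne', div_le_div_iff₀ hp ht]
      nlinarith
    rw [abs_le]; constructor <;> linarith
  rw [e]
  refine (norm_add_le _ _).trans ?_
  rw [norm_div, norm_mul, Complex.norm_real, Complex.norm_real, Real.norm_eq_abs, Real.norm_eq_abs,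
    abs_of_pos ht]
  have h2 := mb_exp_diff ht hc hz
  have h3 := mb_exp_norm ht hz
  have h4 : ‖Complex.exp (-t) - Complex.exp (-z * t)‖ / t ≤ ‖z - 1‖ * Real.exp (-c * t) := by
    rw [div_le_iff₀ ht]; linarith
  have h5 := mul_le_mul h3 h1 (abs_nonneg _) (Real.exp_pos _).le
  linarith

lemma mbG_one (t : ℝ) : mbG 1 t = 0 := by simp [mbG]

lemma mbG_bound {c t : ℝ} (ht : 0 < t) (hc : c ≤ 1) {z : ℂ} (hz : c ≤ z.re) :
    ‖mbG z t‖ ≤ (‖z - 1‖ + 1) * ‖z - 1‖ * Real.exp (-c * t) := by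
  have := Convex.norm_image_sub_le_of_norm_hasDerivWithin_le
    (f := fun z : ℂ => mbG z t) (s := {w : ℂ | c ≤ w.re} ∩ Metric.closedBall 1 ‖z - 1‖)
    (f' := fun z => mbG' z t) (C := (‖z - 1‖ + 1) * Real.exp (-c * t))
    (x := 1) (y := z)
    (fun w _ => (mbG_hasDeriv w t).hasDerivWithinAt)
    (fun w hw => (mbG'_bound ht hc hw.1).trans (by
      have : ‖w - 1‖ ≤ ‖z - 1‖ := by simpa [dist_eq_norm] using hw.2
      gcongr))
    ((mb_convex c).inter (convex_closedBall _ _)) ⟨by simpa using hc, by simp⟩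
    ⟨hz, by simp [dist_eq_norm]⟩
  rw [mbG_one, sub_zero] at this
  linarith

lemma mbG_meas (s : ℂ) (μ : Measure ℝ) : AEStronglyMeasurable (mbG s) μ := by
  apply Measurable.aestronglyMeasurable
  unfold mbG
  fun_prop

lemma mbG'_meas (s : ℂ) (μ : Measure ℝ) : AEStronglyMeasurable (mbG' s) μ := by
  apply Measurable.aestronglyMeasurable
  unfold mbG'
  fun_prop

lemma mbG_integrable {s : ℂ} (hs : 0 < s.re) : IntegrableOn (mbG s) (Set.Ioi 0) := by
  have hc : 0 < min 1 s.re := lt_min one_pos hs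
  refine Integrable.mono' ((exp_neg_integrableOn_Ioi 0 hc).const_mul
    ((‖s - 1‖ + 1) * ‖s - 1‖)) (mbG_meas s _) ?_
  filter_upwards [ae_restrict_mem measurableSet_Ioi] with t ht
  exact mbG_bound ht (min_le_left _ _) (min_le_right _ _)

lemma mbR_integrable {x : ℝ} (hx : 0 < x) : IntegrableOn (mbR x) (Set.Ioi 0) := by
  have h := (mbG_integrable (s := x) (by simpa using hx)).re
  refine h.congr (Filter.Eventually.of_forall fun t => ?_)
  simp [mbG_ofReal]

lemma mbG_int_diff : DifferentiableOn ℂ (fun s => ∫ t in Set.Ioi (0:ℝ), mbG s t)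
    {z | 0 < z.re} := by
  intro s hs
  have hs : 0 < s.re := hs
  have hc : 0 < min 1 (s.re / 2) := lt_min one_pos (by linarith)
  have hnh : {w : ℂ | s.re / 2 < w.re} ∩ Metric.ball 1 (‖s - 1‖ + 1) ∈ nhds s := by
    refine Filter.inter_mem ?_ ?_
    · exact (isOpen_lt continuous_const Complex.continuous_re).mem_nhds
        (show s.re / 2 < s.re by linarith)
    · exact Metric.isOpen_ball.mem_nhds (by simp [dist_eq_norm])
  have := hasDerivAt_integral_of_dominated_loc_of_deriv_le (μ := volume.restrict (Set.Ioi 0))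
    (F := mbG) (F' := mbG') (x₀ := s)
    (bound := fun t => (‖s - 1‖ + 1 + 1) * Real.exp (-min 1 (s.re / 2) * t)) hnh
    (Filter.Eventually.of_forall fun w => mbG_meas w _) (mbG_integrable hs) (mbG'_meas s _)
    (by
      filter_upwards [ae_restrict_mem measurableSet_Ioi] with t ht w hw
      have h1 : ‖w - 1‖ ≤ ‖s - 1‖ + 1 := by
        have := hw.2
        rw [Metric.mem_ball, dist_eq_norm] at this
        exact this.le
      have h2 : s.re / 2 < w.re := hw.1
      refine (mbG'_bound ht (min_le_left _ _) ((min_le_right _ _).trans h2.le)).trans ?_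
      gcongr)
    ((exp_neg_integrableOn_Ioi 0 hc).const_mul _)
    (Filter.Eventually.of_forall fun t w _ => mbG_hasDeriv w t)
  exact this.2.differentiableAt.differentiableWithinAt

noncomputable def mbF (x : ℝ) : ℝ := ∫ t in Set.Ioi (0:ℝ), mbR x t

lemma mbF_add_one {x : ℝ} (hx : 0 < x) : mbF (x + 1) = Real.log x + mbF x := by
  have hx1 : 0 < x + 1 := by linarith
  have hpt : ∀ t ∈ Set.Ioi (0:ℝ), mbR (x + 1) t - mbR x t =
      t⁻¹ • ((fun u => Real.exp (-u)) (1 * t) - (fun u => Real.exp (-u)) (x * t)) := by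
    intro t ht
    have ht : 0 < t := ht
    have hp := (mb_one_sub_pos ht).ne'
    have e : Real.exp (-(x + 1) * t) = Real.exp (-x * t) * Real.exp (-t) := by
      rw [← Real.exp_add]; ring_nf
    simp only [mbR, e, smul_eq_mul, one_mul, ← neg_mul]
    field_simp
    ring
  have hi := (mbR_integrable hx1).sub (mbR_integrable hx)
  have hsub : mbF (x + 1) - mbF x = ∫ t in Set.Ioi (0:ℝ), (mbR (x + 1) t - mbR x t) :=
    (integral_sub (mbR_integrable hx1) (mbR_integrable hx)).symm
  have hfr := Frullani.integral_Ioi_eq (f := fun u : ℝ => Real.exp (-u)) (a := 1) (b := x)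
    (L := 1) (R := 0)
    ((by fun_prop : Continuous fun u : ℝ => Real.exp (-u)).locallyIntegrable.locallyIntegrableOn _)
    one_pos hx
    (by
      have : Continuous fun u : ℝ => Real.exp (-u) := by fun_prop
      simpa using (this.tendsto 0).mono_left nhdsWithin_le_nhds)
    Real.tendsto_exp_neg_atTop_nhds_zero
    (IntegrableOn.congr_fun hi hpt measurableSet_Ioi)
  rw [setIntegral_congr_fun measurableSet_Ioi hpt, hfr] at hsub
  simp at hsub
  linarith

lemma mbF_one : mbF 1 = 0 := by simp [mbF, mbR]

lemma mbF_convex : ConvexOn ℝ (Set.Ioi 0) mbF := by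
  refine ⟨convex_Ioi 0, ?_⟩
  intro x hx y hy a b ha hb hab
  have hx : 0 < x := hx
  have hy : 0 < y := hy
  have hxy : 0 < a • x + b • y := (convex_Ioi (0:ℝ)) hx hy ha hb hab
  have e : a • mbF x + b • mbF y = ∫ t in Set.Ioi (0:ℝ), (a * mbR x t + b * mbR y t) := by
    rw [integral_add ((mbR_integrable hx).const_mul a) ((mbR_integrable hy).const_mul b),
      integral_const_mul, integral_const_mul]
    rfl
  rw [e]
  refine setIntegral_mono_on (mbR_integrable hxy)
    (((mbR_integrable hx).const_mul a).add ((mbR_integrable hy).const_mul b))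
    measurableSet_Ioi ?_
  intro t ht
  have ht : 0 < t := ht
  have hp := mb_one_sub_pos ht
  have hcv := convexOn_exp.2 (Set.mem_univ (-x * t)) (Set.mem_univ (-y * t)) ha hb hab
  simp only [smul_eq_mul] at hcv ⊢
  have e1 : -(a * x + b * y) * t = a * (-x * t) + b * (-y * t) := by ring
  have e2 : a * mbR x t + b * mbR y t - mbR (a * x + b * y) t =
      (a * Real.exp (-x * t) + b * Real.exp (-y * t) - Real.exp (-(a * x + b * y) * t))
        / (1 - Real.exp (-t)) / t := by
    obtain rfl : b = 1 - a := by linarith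
    simp only [mbR]
    field_simp
    ring
  rw [← sub_nonneg, e2, e1]
  exact div_nonneg (div_nonneg (by linarith) hp.le) ht.le

lemma mbF_exp {x : ℝ} (hx : 0 < x) : Real.exp (mbF x) = Real.Gamma x := by
  refine Real.eq_Gamma_of_log_convex (f := fun x => Real.exp (mbF x)) ?_ ?_ ?_ ?_ hx
  · simpa [Function.comp_def] using mbF_convex
  · intro y hy
    rw [mbF_add_one hy, Real.exp_add, Real.exp_log hy]
  · intro y _; exact Real.exp_pos _
  · simp [mbF_one]

/-- Malmsten/Binet: any holomorphic logarithm of `Γ` on the right half-plane that is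
real on the positive reals is given by Malmsten's integral. -/
theorem malmsten_binet_formula (f : ℂ → ℂ)
    (hf : DifferentiableOn ℂ f {z | 0 < z.re})
    (hexp : ∀ z : ℂ, 0 < z.re → Complex.exp (f z) = Complex.Gamma z)
    (hreal : ∀ x : ℝ, 0 < x → (f x).im = 0) :
    ∀ s : ℂ, 0 < s.re →
      f s = ∫ t in Set.Ioi (0 : ℝ),
        ((s - 1) * Complex.exp (-t) -
          (Complex.exp (-t) - Complex.exp (-s * t)) / (1 - Complex.exp (-t))) / t := by
  have hopen : IsOpen {z : ℂ | 0 < z.re} := isOpen_lt continuous_const Complex.continuous_re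
  have hR : ∀ x : ℝ, 0 < x → f x = ∫ t in Set.Ioi (0:ℝ), mbG x t := by
    intro x hx
    have h1 : (∫ t in Set.Ioi (0:ℝ), mbG x t) = (mbF x : ℂ) := by
      simp only [mbG_ofReal, mbF]
      exact integral_ofReal
    have h2 : f x = ((f x).re : ℂ) := by
      apply Complex.ext <;> simp [hreal x hx]
    have h3 := hexp x (by simpa using hx)
    rw [h2, Complex.Gamma_ofReal, ← mbF_exp hx, ← Complex.ofReal_exp] at h3
    have h4 : (f x).re = mbF x := Real.exp_injective (by exact_mod_cast h3)
    rw [h1, h2, h4]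
  have hfreq : ∃ᶠ z in nhdsWithin (1:ℂ) {1}ᶜ, f z = ∫ t in Set.Ioi (0:ℝ), mbG z t := by
    have ht : Filter.Tendsto (fun x : ℝ => (x : ℂ)) (nhdsWithin 1 {1}ᶜ)
        (nhdsWithin (1:ℂ) {1}ᶜ) := by
      refine tendsto_nhdsWithin_iff.2 ⟨?_, ?_⟩
      · exact (Complex.continuous_ofReal.tendsto' 1 1 (by simp)).mono_left nhdsWithin_le_nhds
      · filter_upwards [self_mem_nhdsWithin] with x hx
        simpa using hx
    refine ht.frequently (Filter.Eventually.frequently ?_)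
    filter_upwards [mem_nhdsWithin_of_mem_nhds (Ioi_mem_nhds (one_pos : (0:ℝ) < 1))] with x hx
    exact hR x hx
  have key := AnalyticOnNhd.eqOn_of_preconnected_of_frequently_eq
    (hf.analyticOnNhd hopen) (mbG_int_diff.analyticOnNhd hopen)
    (convex_halfSpace_re_gt 0).isPreconnected (show (1:ℂ) ∈ {z : ℂ | 0 < z.re} by simp) hfreq
  intro s hs
  exact key hs
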